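/- arXiv:2107.07815 — 3 statements merged into one kernel-verified Lean document; each statement's English description precedes it below -/
import Mathlib

section
/- For every ordering d of V and all integers 1 ≤ a ≤ b, there exists a subset B ⊆ E such that every vertex is incident to at most 2 edges of B and Σ_{e∈B} w(e) ≥ (1/(b−a+1)) · Σ w(u,v), where the latter sum is over edges {u,v} ∈ E with a ≤ |d(u)−d(v)| ≤ b. -/
/-- Summing a function of edges over ordered adjacent pairs counts every edge twice. -/
theorem SimpleGraph.sum_sum_adj_eq_two_mul_sum_edgeFinset {V : Type*} [Fintype V] [DecidableEq V]
    (G : SimpleGraph V) [DecidableRel G.Adj] (F : Sym2 V → ℝ) :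
    ∑ u : V, ∑ v : V, (if G.Adj u v then F s(u, v) else 0) = 2 * ∑ e ∈ G.edgeFinset, F e := by
  rw [← Fintype.sum_prod_type' (f := fun u v => if G.Adj u v then F s(u, v) else 0),
    ← Finset.sum_filter,
    ← Finset.sum_fiberwise_of_maps_to (t := G.edgeFinset) (g := fun p : V × V => s(p.1, p.2))
      (by simp), Finset.mul_sum]
  refine Finset.sum_congr rfl fun e he => ?_
  induction e with
  | _ x y =>
    have hxy : G.Adj x y := by simpa using he
    have hfib : ((Finset.univ.filter fun p : V × V => G.Adj p.1 p.2).filter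
        fun p => s(p.1, p.2) = s(x, y)) = {(x, y), (y, x)} := by
      ext ⟨u, v⟩
      simp only [Finset.mem_filter, Finset.mem_univ, true_and, Sym2.eq_iff, Finset.mem_insert,
        Finset.mem_singleton, Prod.mk.injEq]
      constructor
      · exact fun h => h.2
      · rintro (⟨rfl, rfl⟩ | ⟨rfl, rfl⟩)
        · exact ⟨hxy, Or.inl ⟨rfl, rfl⟩⟩
        · exact ⟨hxy.symm, Or.inr ⟨rfl, rfl⟩⟩
    rw [hfib, Finset.sum_pair (by simp [hxy.ne]), Sym2.eq_swap (a := y), two_mul]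

/-- The distance between the endpoints of an unordered pair in the ordering `d`. -/
def orderingDist {V : Type*} {n : ℕ} (d : V ≃ Fin n) : Sym2 V → ℕ :=
  Sym2.lift ⟨fun u v => Nat.dist (d u) (d v), fun _ _ => Nat.dist_comm _ _⟩

theorem orderingDist_mk {V : Type*} {n : ℕ} (d : V ≃ Fin n) (u v : V) :
    orderingDist d s(u, v) = Nat.dist (d u) (d v) := rfl

/-- At most two pairs of a given length in the ordering contain a given vertex. -/
theorem card_filter_orderingDist_eq_le_two {V : Type*} [DecidableEq V] {n : ℕ}
    (d : V ≃ Fin n) (S : Finset (Sym2 V)) (i : ℕ) (v : V) :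
    ((S.filter fun e => orderingDist d e = i).filter fun e => v ∈ e).card ≤ 2 := by
  have : Fintype V := Fintype.ofEquiv _ d.symm
  have hcover : ((S.filter fun e => orderingDist d e = i).filter fun e => v ∈ e) ⊆
      (Finset.univ.filter fun u : V => Nat.dist (d v) (d u) = i).image fun u => s(v, u) := by
    intro e he
    simp only [Finset.mem_filter] at he
    obtain ⟨⟨-, hi⟩, u, rfl⟩ := he
    exact Finset.mem_image.2 ⟨u, by simpa [orderingDist_mk] using hi, rfl⟩
  refine (Finset.card_le_card hcover).trans (Finset.card_image_le.trans ?_)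
  rw [← Finset.card_image_of_injective _ (Fin.val_injective.comp d.injective)]
  refine (Finset.card_le_card (t := {(d v : ℕ) + i, (d v : ℕ) - i}) ?_).trans Finset.card_le_two
  intro m hm
  simp only [Finset.mem_image, Finset.mem_filter, Finset.mem_univ, true_and,
    Function.comp_apply] at hm
  obtain ⟨u, hu, rfl⟩ := hm
  simp only [Nat.dist, Finset.mem_insert, Finset.mem_singleton] at hu ⊢
  omega

/-- For every ordering `d` and integers `1 ≤ a ≤ b`, there is a simple
2-matching `B ⊆ E` whose weight is at least `1/(b-a+1)` times the total weight of the edges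
whose endpoints are at distance between `a` and `b` in the ordering. -/
theorem extTSP_band_two_matching {V : Type} [Fintype V] [DecidableEq V]
    (G : SimpleGraph V) [DecidableRel G.Adj]
    (w : V → V → ℝ) (hw_symm : ∀ u v, w u v = w v u)
    (hw_pos : ∀ u v, G.Adj u v → 0 < w u v)
    (a b : ℕ) (ha : 1 ≤ a) (hab : a ≤ b)
    (d : V ≃ Fin (Fintype.card V)) :
    ∃ B : Finset (Sym2 V), B ⊆ G.edgeFinset ∧
      (∀ v : V, (B.filter (fun e => v ∈ e)).card ≤ 2) ∧
      ∑ e ∈ B, Sym2.lift ⟨w, hw_symm⟩ e ≥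
        (1 / ((b : ℝ) - (a : ℝ) + 1)) *
          ((1 / 2) * ∑ u : V, ∑ v : V,
            if G.Adj u v ∧ a ≤ Nat.dist (d u) (d v) ∧ Nat.dist (d u) (d v) ≤ b
            then w u v else 0) := by
  set W : Sym2 V → ℝ := Sym2.lift ⟨w, hw_symm⟩ with hW
  have hpairs : ∑ u : V, ∑ v : V,
      (if G.Adj u v ∧ a ≤ Nat.dist (d u) (d v) ∧ Nat.dist (d u) (d v) ≤ b then w u v else 0) =
      2 * ∑ e ∈ G.edgeFinset, if orderingDist d e ∈ Finset.Icc a b then W e else 0 := by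
    rw [← G.sum_sum_adj_eq_two_mul_sum_edgeFinset]
    simp only [ite_and, Finset.mem_Icc, orderingDist_mk, hW, Sym2.lift_mk]
  have hlengths : ∑ i ∈ Finset.Icc a b,
      ∑ e ∈ G.edgeFinset.filter (fun e => orderingDist d e = i), W e =
      ∑ e ∈ G.edgeFinset, if orderingDist d e ∈ Finset.Icc a b then W e else 0 := by
    simp only [Finset.sum_filter]
    rw [Finset.sum_comm]
    simp only [Finset.sum_ite_eq]
  have hcard : ((Finset.Icc a b).card : ℝ) = (b : ℝ) - a + 1 := by
    rw [Nat.card_Icc, Nat.cast_sub (by omega)]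
    push_cast
    ring
  have hpos : (0 : ℝ) < (b : ℝ) - a + 1 := by
    have : (a : ℝ) ≤ b := by exact_mod_cast hab
    linarith
  rw [hpairs, ← hlengths]
  set T := ∑ i ∈ Finset.Icc a b,
    ∑ e ∈ G.edgeFinset.filter (fun e => orderingDist d e = i), W e with hT
  obtain ⟨i, -, hi⟩ := Finset.exists_le_of_sum_le (s := Finset.Icc a b)
    (f := fun _ => 1 / ((b : ℝ) - a + 1) * T)
    (g := fun i => ∑ e ∈ G.edgeFinset.filter (fun e => orderingDist d e = i), W e)
    ⟨a, Finset.mem_Icc.2 ⟨le_rfl, hab⟩⟩ (by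
      rw [Finset.sum_const, nsmul_eq_mul, hcard, ← hT, ← mul_assoc,
        mul_one_div_cancel hpos.ne', one_mul])
  refine ⟨G.edgeFinset.filter fun e => orderingDist d e = i, Finset.filter_subset _ _,
    card_filter_orderingDist_eq_le_two d _ i, ?_⟩
  rw [ge_iff_le, ← mul_assoc (1 / 2 : ℝ) 2 T, one_div_mul_cancel two_ne_zero, one_mul]
  exact hi
end

section
/- Let A ⊆ E be a maximum-weight subset of edges such that every vertex is incident to at most 2 edges of A (so A is a vertex-disjoint union of simple paths and simple cycles), and let A' be obtained from A by deleting a minimum-weight edge from each cycle of A (so A' is a vertex-disjoint union of simple paths). Then every ordering d of V that places the vertices of each path of A' in consecutive positions, in path order, satisfies val(d) ≥ OPT · (k+1)/(k(k+2)); that is, this cycle-cover-based procedure is a (1 + 1/(k+1))·k-approximation for Ext-TSP. -/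
open Classical in
/-- The Ext-TSP value of an ordering `d` of the vertices of `G`. -/
noncomputable def extVal {V : Type} [Fintype V] (G : SimpleGraph V)
    (w : V → V → ℝ) (f : ℕ → ℝ) (d : V ≃ Fin (Fintype.card V)) : ℝ :=
  (1 / 2) * ∑ u : V, ∑ v : V,
    if G.Adj u v then f (Nat.dist (d u) (d v)) * w u v else 0

open Finset

/-- The distance between the positions of the two ends of a pair under an ordering `d`. -/
def posDist {V : Type} {n : ℕ} (d : V ≃ Fin n) : Sym2 V → ℕ :=
  Sym2.lift ⟨fun u v => Nat.dist (d u) (d v), fun _ _ => Nat.dist_comm _ _⟩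

lemma posDist_mk {V : Type} {n : ℕ} (d : V ≃ Fin n) (u v : V) :
    posDist d s(u, v) = Nat.dist (d u) (d v) := rfl

lemma posDist_pos {V : Type} {n : ℕ} (d : V ≃ Fin n) {u v : V} (huv : u ≠ v) :
    1 ≤ posDist d s(u, v) := by
  rw [posDist_mk]
  refine Nat.dist_pos_of_ne fun h => huv ?_
  exact d.injective (Fin.ext h)

lemma sum_adj_eq_two_mul_sum_edgeFinset {V : Type} [Fintype V] [DecidableEq V]
    (G : SimpleGraph V) [DecidableRel G.Adj] (h : Sym2 V → ℝ) :
    (∑ u : V, ∑ v : V, if G.Adj u v then h s(u, v) else 0) = 2 * ∑ e ∈ G.edgeFinset, h e := by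
  rw [← Finset.sum_product', ← Finset.sum_filter, Finset.mul_sum]
  rw [← Finset.sum_fiberwise_of_maps_to (t := G.edgeFinset) (g := fun p : V × V => s(p.1, p.2))
    (fun p hp => by simpa using hp)]
  refine Finset.sum_congr rfl fun e he => ?_
  induction e using Sym2.ind with
  | _ a b =>
    have hab : G.Adj a b := by simpa using he
    have hset : ((univ ×ˢ univ).filter (fun p : V × V => G.Adj p.1 p.2)).filter
        (fun p => s(p.1, p.2) = s(a, b)) = {(a, b), (b, a)} := by
      ext ⟨x, y⟩
      simp only [mem_filter, mem_product, mem_univ, true_and, Sym2.eq_iff, mem_insert,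
        mem_singleton, Prod.mk.injEq]
      constructor
      · exact fun h => h.2
      · rintro (⟨rfl, rfl⟩ | ⟨rfl, rfl⟩)
        · exact ⟨hab, .inl ⟨rfl, rfl⟩⟩
        · exact ⟨hab.symm, .inr ⟨rfl, rfl⟩⟩
    rw [hset, Finset.sum_pair (by simp [hab.ne]), Sym2.eq_swap (a := b) (b := a)]
    ring

lemma extVal_eq_sum_edgeFinset {V : Type} [Fintype V] [DecidableEq V]
    (G : SimpleGraph V) [DecidableRel G.Adj] (w : V → V → ℝ) (hw_symm : ∀ u v, w u v = w v u)
    (f : ℕ → ℝ) (d : V ≃ Fin (Fintype.card V)) :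
    extVal G w f d =
      ∑ e ∈ G.edgeFinset, f (posDist d e) * Sym2.lift ⟨w, hw_symm⟩ e := by
  have h := sum_adj_eq_two_mul_sum_edgeFinset G
    (fun e => f (posDist d e) * Sym2.lift ⟨w, hw_symm⟩ e)
  simp only [posDist_mk, Sym2.lift_mk] at h
  unfold extVal
  have h2 : (∑ u : V, ∑ v : V, @ite ℝ (G.Adj u v) (Classical.propDecidable _)
      (f (Nat.dist (d u) (d v)) * w u v) 0) =
      ∑ u : V, ∑ v : V, if G.Adj u v then f (Nat.dist (d u) (d v)) * w u v else 0 := by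
    refine Finset.sum_congr rfl fun u _ => Finset.sum_congr rfl fun v _ => ?_
    congr
  rw [h2, h]
  ring

/-- At most two pairs through a given vertex have a given position distance. -/
lemma card_filter_posDist_le_two {V : Type} [DecidableEq V] {n : ℕ}
    (d : V ≃ Fin n) (i : ℕ) (E : Finset (Sym2 V)) (v : V) :
    ((E.filter (fun e => posDist d e = i)).filter (fun e => v ∈ e)).card ≤ 2 := by
  let g : ℕ → Sym2 V := fun m => if h : m < n then s(v, d.symm ⟨m, h⟩) else s(v, v)
  have hsub : (E.filter (fun e => posDist d e = i)).filter (fun e => v ∈ e) ⊆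
      ({(d v : ℕ) - i, (d v : ℕ) + i} : Finset ℕ).image g := by
    intro e he
    simp only [mem_filter] at he
    obtain ⟨⟨-, hi⟩, hv⟩ := he
    obtain ⟨x, rfl⟩ := Sym2.mem_iff_exists.1 hv
    rw [posDist_mk] at hi
    rw [mem_image]
    refine ⟨d x, ?_, ?_⟩
    · simp only [mem_insert, mem_singleton]
      unfold Nat.dist at hi
      omega
    · simp [g]
  exact (card_le_card hsub).trans (card_image_le.trans card_le_two)

/-- Grouping edges by position distance bounds the value of any ordering by the total discount
times the largest weight of a simple 2-matching. -/
lemma extVal_le_sum_mul {V : Type} [Fintype V] [DecidableEq V]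
    (G : SimpleGraph V) [DecidableRel G.Adj] (w : V → V → ℝ) (hw_symm : ∀ u v, w u v = w v u)
    (k : ℕ) (f : ℕ → ℝ) (hf_nonneg : ∀ i, 0 ≤ f i) (hf_zero : ∀ i, k < i → f i = 0) (M : ℝ)
    (hM : ∀ B : Finset (Sym2 V), B ⊆ G.edgeFinset →
      (∀ v : V, (B.filter (fun e => v ∈ e)).card ≤ 2) →
      ∑ e ∈ B, Sym2.lift ⟨w, hw_symm⟩ e ≤ M)
    (d : V ≃ Fin (Fintype.card V)) :
    extVal G w f d ≤ (∑ i ∈ range k, f (i + 1)) * M := by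
  rw [extVal_eq_sum_edgeFinset G w hw_symm, Finset.sum_mul]
  calc ∑ e ∈ G.edgeFinset, f (posDist d e) * Sym2.lift ⟨w, hw_symm⟩ e
      = ∑ e ∈ G.edgeFinset, ∑ i ∈ range k,
          if posDist d e = i + 1 then f (i + 1) * Sym2.lift ⟨w, hw_symm⟩ e else 0 := by
        refine Finset.sum_congr rfl fun e he => ?_
        have hpos : 1 ≤ posDist d e := by
          induction e using Sym2.ind with
          | _ a b => exact posDist_pos d (SimpleGraph.Adj.ne (by simpa using he))
        obtain ⟨j, hj⟩ := Nat.exists_eq_add_of_le' hpos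
        simp only [hj, add_left_inj, Finset.sum_ite_eq, mem_range]
        split_ifs with hjk
        · rfl
        · rw [hf_zero _ (by omega), zero_mul]
    _ = ∑ i ∈ range k, f (i + 1) *
          ∑ e ∈ G.edgeFinset.filter (fun e => posDist d e = i + 1),
            Sym2.lift ⟨w, hw_symm⟩ e := by
        rw [Finset.sum_comm]
        refine Finset.sum_congr rfl fun i _ => ?_
        rw [Finset.mul_sum, Finset.sum_filter]
    _ ≤ ∑ i ∈ range k, f (i + 1) * M := by
        refine Finset.sum_le_sum fun i _ => mul_le_mul_of_nonneg_left ?_ (hf_nonneg _)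
        exact hM _ (filter_subset _ _) (card_filter_posDist_le_two d _ _)

lemma posDist_le_walk_length {V : Type} {n : ℕ} (d : V ≃ Fin n) {H : SimpleGraph V}
    (hd : ∀ u v, H.Adj u v → Nat.dist (d u) (d v) = 1) {u v : V} (p : H.Walk u v) :
    posDist d s(u, v) ≤ p.length := by
  rw [posDist_mk]
  induction p with
  | nil => simp
  | @cons a b c hab q ih =>
    have h1 := hd _ _ hab
    rw [SimpleGraph.Walk.length_cons]
    unfold Nat.dist at *
    omega

lemma exists_two_neighbors {V : Type} [DecidableEq V] {A : Finset (Sym2 V)} {x : V}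
    (h : (A.filter (fun e => x ∈ e)).card = 2) :
    ∃ y z, y ≠ z ∧ s(x, y) ∈ A ∧ s(x, z) ∈ A := by
  obtain ⟨e₁, e₂, hne, heq⟩ := card_eq_two.1 h
  have h1 : e₁ ∈ A.filter (fun e => x ∈ e) := by simp [heq]
  have h2 : e₂ ∈ A.filter (fun e => x ∈ e) := by simp [heq]
  rw [mem_filter] at h1 h2
  obtain ⟨y, rfl⟩ := Sym2.mem_iff_exists.1 h1.2
  obtain ⟨z, rfl⟩ := Sym2.mem_iff_exists.1 h2.2
  exact ⟨y, z, fun hyz => hne (by rw [hyz]), h1.1, h2.1⟩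

/-- If `s(u, v)` is the only edge of a cycle of `A` missing from `A'`, and `A'` is laid out along
consecutive positions, then `u` and `v` are joined by a path of `A'`. -/
lemma reachable_of_deleted {V : Type} [Fintype V] [DecidableEq V] {n : ℕ} (d : V ≃ Fin n)
    {A A' : Finset (Sym2 V)} (hA'A : A' ⊆ A)
    (hd : ∀ u v : V, s(u, v) ∈ A' → Nat.dist (d u) (d v) = 1) {u v : V}
    (hdeg : ∀ x : V, (SimpleGraph.fromEdgeSet (A : Set (Sym2 V))).Reachable u x →
      (A.filter (fun e => x ∈ e)).card = 2)
    (hone : ∀ a b : V, s(a, b) ∈ A → s(a, b) ∉ A' →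
      (SimpleGraph.fromEdgeSet (A : Set (Sym2 V))).Reachable u a → s(u, v) = s(a, b)) :
    (SimpleGraph.fromEdgeSet (A' : Set (Sym2 V))).Reachable u v := by
  classical
  set H' := SimpleGraph.fromEdgeSet (A' : Set (Sym2 V)) with hH'
  have hle : H' ≤ SimpleGraph.fromEdgeSet (A : Set (Sym2 V)) :=
    SimpleGraph.fromEdgeSet_mono (by exact_mod_cast hA'A)
  have hstep : ∀ x y, H'.Reachable u x → s(x, y) ∈ A' → H'.Reachable u y := by
    intro x y hx hxy
    refine hx.trans (SimpleGraph.Adj.reachable ?_)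
    rw [hH', SimpleGraph.fromEdgeSet_adj]
    refine ⟨by exact_mod_cast hxy, ?_⟩
    rintro rfl
    simpa using hd _ _ hxy
  by_contra hv
  have hmem : ∀ x y, H'.Reachable u x → x ≠ u → s(x, y) ∈ A → s(x, y) ∈ A' := by
    intro x y hx hxu hxy
    by_contra hnot
    have h := hone x y hxy hnot (hx.mono hle)
    rw [Sym2.eq_iff] at h
    rcases h with ⟨h, -⟩ | ⟨-, h⟩
    · exact hxu h.symm
    · exact hv (h ▸ hx)
  have hnbr : ∀ x, H'.Reachable u x → x ≠ u →
      (∃ y, H'.Reachable u y ∧ d y < d x) ∧ (∃ y, H'.Reachable u y ∧ d x < d y) := by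
    intro x hx hxu
    obtain ⟨y, z, hyz, hy, hz⟩ := exists_two_neighbors (hdeg x (hx.mono hle))
    have hy' := hmem x y hx hxu hy
    have hz' := hmem x z hx hxu hz
    have hdy := hd _ _ hy'
    have hdz := hd _ _ hz'
    have hne : (d y : ℕ) ≠ d z := fun h => hyz (d.injective (Fin.ext h))
    have hry := hstep x y hx hy'
    have hrz := hstep x z hx hz'
    unfold Nat.dist at hdy hdz
    simp only [Fin.lt_def]
    by_cases hlt : (d y : ℕ) < d x
    · exact ⟨⟨y, hry, hlt⟩, ⟨z, hrz, by omega⟩⟩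
    · exact ⟨⟨z, hrz, by omega⟩, ⟨y, hry, by omega⟩⟩
  let C := univ.filter (fun x => H'.Reachable u x)
  have hC : C.Nonempty := ⟨u, by simp [C]⟩
  obtain ⟨p, hpC, hp⟩ := C.exists_min_image d hC
  obtain ⟨q, hqC, hq⟩ := C.exists_max_image d hC
  simp only [C, mem_filter, mem_univ, true_and] at hpC hp hqC hq
  have hpu : p = u := by
    by_contra h
    obtain ⟨⟨y, hy, hlt⟩, -⟩ := hnbr p hpC h
    exact absurd (hp y hy) (not_le.2 hlt)
  have hqu : q = u := by
    by_contra h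
    obtain ⟨-, ⟨y, hy, hlt⟩⟩ := hnbr q hqC h
    exact absurd (hq y hy) (not_le.2 hlt)
  subst hpu
  subst hqu
  obtain ⟨y, z, hyz, hy, hz⟩ := exists_two_neighbors (hdeg q (SimpleGraph.Reachable.refl q))
  have hisolated : ∀ x, s(q, x) ∈ A → x = v := by
    intro x hx
    by_contra hxv
    have hx' : s(q, x) ∈ A' := by
      by_contra hnot
      have h := hone q x hx hnot (SimpleGraph.Reachable.refl q)
      exact hxv (Sym2.congr_right.1 h).symm
    have hr := hstep q x (SimpleGraph.Reachable.refl q) hx'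
    have heq := le_antisymm (hp x hr) (hq x hr)
    have h1 := hd _ _ hx'
    rw [heq, Nat.dist_self] at h1
    exact zero_ne_one h1
  exact hyz ((hisolated y hy).trans (hisolated z hz).symm)

lemma sum_discount_le {f : ℕ → ℝ} (hf_mono : Antitone f) (hf_one : f 1 = 1) {j k : ℕ}
    (hjk : j ≤ k) :
    ∑ i ∈ range k, f (i + 1) ≤ j + ((k : ℝ) - j) * f (j + 1) := by
  obtain ⟨t, rfl⟩ := Nat.exists_eq_add_of_le hjk
  rw [Finset.sum_range_add]
  have h1 : ∑ i ∈ range j, f (i + 1) ≤ (range j).card • (1 : ℝ) :=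
    Finset.sum_le_card_nsmul _ _ _ fun i _ => hf_one ▸ hf_mono (by omega)
  have h2 : ∑ i ∈ range t, f (j + i + 1) ≤ (range t).card • f (j + 1) :=
    Finset.sum_le_card_nsmul _ _ _ fun i _ => hf_mono (by omega)
  simp only [card_range, nsmul_eq_mul, mul_one] at h1 h2
  push_cast
  linarith

lemma discount_sum_mul_le {f : ℕ → ℝ} (hf_nonneg : ∀ i, 0 ≤ f i) (hf_mono : Antitone f)
    (hf_one : f 1 = 1) {k : ℕ} (hf_zero : ∀ i, k < i → f i = 0) (j : ℕ) :
    ((k : ℝ) + 1) * (j + 2) * ∑ i ∈ range k, f (i + 1) ≤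
      k * (k + 2) * (j + 1 + f (j + 1)) := by
  have hj : (0 : ℝ) ≤ j := j.cast_nonneg
  have hk : (0 : ℝ) ≤ k := k.cast_nonneg
  rcases le_total j k with hjk | hkj
  · have hF := sum_discount_le hf_mono hf_one hjk
    have hx0 := hf_nonneg (j + 1)
    have hx1 : f (j + 1) ≤ 1 := hf_one ▸ hf_mono (by omega)
    have hjk' : (j : ℝ) ≤ k := by exact_mod_cast hjk
    refine (mul_le_mul_of_nonneg_left hF (by positivity)).trans ?_
    have h0 : 0 ≤ ((k : ℝ) - j) * ((k + 1) * (j + 1) + 1) :=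
      mul_nonneg (by linarith) (by positivity)
    have h1 : 0 ≤ (k : ℝ) * (j + 2) := by positivity
    nlinarith [mul_nonneg (sub_nonneg.2 hx1) h0, mul_nonneg hx0 h1]
  · have hF := sum_discount_le hf_mono hf_one (le_refl k)
    have hjk' : (k : ℝ) ≤ j := by exact_mod_cast hkj
    rw [hf_zero (j + 1) (by omega)]
    refine (mul_le_mul_of_nonneg_left hF (by positivity)).trans ?_
    nlinarith [mul_nonneg hk (sub_nonneg.2 hjk')]

/-- A set of pairs in which every vertex of `C` has degree two has at least `#C` elements. -/
lemma card_le_card_of_degree_two {V : Type} [DecidableEq V] (C : Finset V)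
    (S : Finset (Sym2 V)) (hdeg : ∀ x ∈ C, (S.filter (fun e => x ∈ e)).card = 2) :
    C.card ≤ S.card := by
  have h := Finset.sum_card_bipartiteAbove_eq_sum_card_bipartiteBelow
    (s := C) (t := S) (fun x e => x ∈ e)
  have h1 : ∑ x ∈ C, (bipartiteAbove (fun x e => x ∈ e) S x).card = C.card * 2 :=
    Finset.sum_const_nat hdeg
  have h2 : ∑ e ∈ S, (bipartiteBelow (fun x e => x ∈ e) C e).card ≤ S.card * 2 := by
    rw [← smul_eq_mul]
    refine Finset.sum_le_card_nsmul _ _ _ fun e _ => ?_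
    induction e using Sym2.ind with
    | _ a b =>
      have : bipartiteBelow (fun (x : V) (e : Sym2 V) => x ∈ e) C s(a, b) ⊆ {a, b} := by
        intro x hx
        simpa using ((mem_bipartiteBelow _).1 hx).2
      exact (card_le_card this).trans card_le_two
  omega

/-- Let `A` be a maximum-weight simple 2-matching (every vertex meets at
most two edges of `A`, so `A` is a disjoint union of paths and cycles), and let `A' ⊆ A` be
obtained by deleting from each cycle of `A` exactly one minimum-weight edge.  Then every
ordering `d` that lays out each path of `A'` in consecutive positions in path order (i.e.
every edge of `A'` joins consecutive positions) satisfies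
`val(d) ≥ OPT·(k+1)/(k(k+2))` — the cycle-cover algorithm is a `(1 + 1/(k+1))·k`
approximation. -/
theorem extTSP_cycle_cover_approx {V : Type} [Fintype V] [DecidableEq V]
    (G : SimpleGraph V) [DecidableRel G.Adj]
    (w : V → V → ℝ) (hw_symm : ∀ u v, w u v = w v u)
    (hw_pos : ∀ u v, G.Adj u v → 0 < w u v)
    (k : ℕ) (hk : 1 ≤ k)
    (f : ℕ → ℝ) (hf_nonneg : ∀ i, 0 ≤ f i) (hf_mono : Antitone f)
    (hf_one : f 1 = 1) (hf_zero : ∀ i, k < i → f i = 0)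
    (A A' : Finset (Sym2 V))
    (hAE : A ⊆ G.edgeFinset)
    (hAdeg : ∀ v : V, (A.filter (fun e => v ∈ e)).card ≤ 2)
    -- `A` has maximum weight among simple 2-matchings
    (hAmax : ∀ B : Finset (Sym2 V), B ⊆ G.edgeFinset →
      (∀ v : V, (B.filter (fun e => v ∈ e)).card ≤ 2) →
      ∑ e ∈ B, Sym2.lift ⟨w, hw_symm⟩ e ≤ ∑ e ∈ A, Sym2.lift ⟨w, hw_symm⟩ e)
    (hA'A : A' ⊆ A)
    -- every deleted edge lies on a cycle of `A` (a connected component in which every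
    -- vertex meets exactly two edges of `A`) and has minimum weight in that cycle
    (hdel : ∀ u v : V, s(u, v) ∈ A → s(u, v) ∉ A' →
      (∀ x : V, (SimpleGraph.fromEdgeSet (A : Set (Sym2 V))).Reachable u x →
        (A.filter (fun e => x ∈ e)).card = 2) ∧
      (∀ a b : V, s(a, b) ∈ A →
        (SimpleGraph.fromEdgeSet (A : Set (Sym2 V))).Reachable u a →
        w u v ≤ w a b))
    -- at most one edge is deleted from each connected component of `A`
    (hone : ∀ u v a b : V, s(u, v) ∈ A → s(u, v) ∉ A' → s(a, b) ∈ A → s(a, b) ∉ A' →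
      (SimpleGraph.fromEdgeSet (A : Set (Sym2 V))).Reachable u a →
      s(u, v) = s(a, b))
    -- every cycle of `A` has an edge deleted
    (hall : ∀ x : V,
      ((A.filter (fun e => x ∈ e)).card = 2 ∧
        (∀ y : V, (SimpleGraph.fromEdgeSet (A : Set (Sym2 V))).Reachable x y →
          (A.filter (fun e => y ∈ e)).card = 2)) →
      ∃ u v : V, s(u, v) ∈ A ∧ s(u, v) ∉ A' ∧
        (SimpleGraph.fromEdgeSet (A : Set (Sym2 V))).Reachable x u)
    (d : V ≃ Fin (Fintype.card V))
    -- `d` places the vertices of each path of `A'` consecutively, in path order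
    (hd : ∀ u v : V, s(u, v) ∈ A' → Nat.dist (d u) (d v) = 1) :
    extVal G w f d ≥
      (⨆ d' : V ≃ Fin (Fintype.card V), extVal G w f d') *
        ((k : ℝ) + 1) / ((k : ℝ) * ((k : ℝ) + 2)) := by
  classical
  set W : Sym2 V → ℝ := Sym2.lift ⟨w, hw_symm⟩ with hW
  set F : ℝ := ∑ i ∈ range k, f (i + 1) with hF
  set H := SimpleGraph.fromEdgeSet (A : Set (Sym2 V)) with hH
  have hAadj : ∀ u v, s(u, v) ∈ A → G.Adj u v := fun u v h => by simpa using hAE h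
  have hWnonneg : ∀ e ∈ G.edgeFinset, 0 ≤ W e := by
    intro e he
    induction e using Sym2.ind with
    | _ a b => exact (hw_pos a b (by simpa using he)).le
  have hkpos : (0 : ℝ) < k := by exact_mod_cast hk
  have hden : (0 : ℝ) < k * (k + 2) := by positivity
  have hopt : (⨆ d' : V ≃ Fin (Fintype.card V), extVal G w f d') ≤ F * ∑ e ∈ A, W e := by
    have : Nonempty (V ≃ Fin (Fintype.card V)) := ⟨d⟩
    exact ciSup_le fun d' => extVal_le_sum_mul G w hw_symm k f hf_nonneg hf_zero _ hAmax d'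
  have hval : ∑ e ∈ A, f (posDist d e) * W e ≤ extVal G w f d := by
    rw [extVal_eq_sum_edgeFinset G w hw_symm]
    exact Finset.sum_le_sum_of_subset_of_nonneg hAE fun e he _ =>
      mul_nonneg (hf_nonneg _) (hWnonneg e he)
  suffices hmain : F * (k + 1) * ∑ e ∈ A, W e ≤
      k * (k + 2) * ∑ e ∈ A, f (posDist d e) * W e by
    rw [ge_iff_le, div_le_iff₀ hden]
    nlinarith [mul_le_mul_of_nonneg_right hopt (by positivity : (0 : ℝ) ≤ k + 1),
      mul_le_mul_of_nonneg_left hval hden.le]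
  have hfA' : ∀ e ∈ A', f (posDist d e) = 1 := by
    intro e he
    induction e using Sym2.ind with
    | _ a b => rw [posDist_mk, hd a b he, hf_one]
  let comp : Sym2 V → H.ConnectedComponent := fun e => H.connectedComponentMk e.out.1
  have hcomp : ∀ a b, s(a, b) ∈ A → comp s(a, b) = H.connectedComponentMk a := by
    intro a b hab
    have hadj : H.Adj a b := by
      rw [hH, SimpleGraph.fromEdgeSet_adj]
      exact ⟨by exact_mod_cast hab, (hAadj a b hab).ne⟩
    have hmem : (s(a, b)).out.1 ∈ s(a, b) := Sym2.out_fst_mem _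
    rw [Sym2.mem_iff] at hmem
    refine SimpleGraph.ConnectedComponent.eq.2 ?_
    rcases hmem with h | h
    · rw [h]
    · rw [h]
      exact hadj.symm.reachable
  rw [← Finset.sum_fiberwise A comp W,
    ← Finset.sum_fiberwise A comp (fun e => f (posDist d e) * W e), Finset.mul_sum,
    Finset.mul_sum]
  refine Finset.sum_le_sum fun κ _ => ?_
  set S := A.filter (fun e => comp e = κ) with hS
  have hSA : S ⊆ A := filter_subset _ _
  have hWS : 0 ≤ ∑ e ∈ S, W e := Finset.sum_nonneg fun e he => hWnonneg e (hAE (hSA he))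
  by_cases hcyc : ∃ e ∈ S, e ∉ A'
  · obtain ⟨e, heS, heA'⟩ := hcyc
    induction e using Sym2.ind with
    | _ u v =>
      have heA := hSA heS
      have hκ : κ = H.connectedComponentMk u := by
        rw [← hcomp u v heA]
        exact ((mem_filter.1 heS).2).symm
      obtain ⟨hdeg, hmin⟩ := hdel u v heA heA'
      have hSmem : ∀ a b, s(a, b) ∈ S ↔ s(a, b) ∈ A ∧ H.Reachable u a := by
        intro a b
        rw [hS, mem_filter]
        refine and_congr_right fun hab => ?_
        rw [hcomp a b hab, hκ, SimpleGraph.ConnectedComponent.eq]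
        exact ⟨fun h => h.symm, fun h => h.symm⟩
      have huniq : ∀ e ∈ S.erase s(u, v), f (posDist d e) * W e = W e := by
        intro e he
        obtain ⟨hne, he⟩ := mem_erase.1 he
        induction e using Sym2.ind with
        | _ a b =>
          obtain ⟨hab, hr⟩ := (hSmem a b).1 he
          have : s(a, b) ∈ A' := by
            by_contra hnot
            exact hne (hone u v a b heA heA' hab hnot hr).symm
          rw [hfA' _ this, one_mul]
      let C := univ.filter (fun x => H.Reachable u x)
      have hCS : C.card ≤ S.card := by
        refine card_le_card_of_degree_two C S fun x hx => ?_
        have hx : H.Reachable u x := by simpa [C] using hx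
        rw [← hdeg x hx]
        congr 1
        ext e
        simp only [mem_filter]
        refine and_congr_left fun hxe => ⟨fun h => hSA h, fun h => ?_⟩
        obtain ⟨y, rfl⟩ := Sym2.mem_iff_exists.1 hxe
        exact (hSmem x y).2 ⟨h, hx⟩
      have hreach := reachable_of_deleted d hA'A hd hdeg
        (fun a b hab hnot hr => hone u v a b heA heA' hab hnot hr)
      have hle : SimpleGraph.fromEdgeSet (A' : Set (Sym2 V)) ≤ H :=
        SimpleGraph.fromEdgeSet_mono (by exact_mod_cast hA'A)
      have hdist : posDist d s(u, v) + 1 ≤ C.card := by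
        obtain ⟨p, hp⟩ := hreach.exists_isPath
        have h1 := posDist_le_walk_length d (fun a b hab => hd a b (by
          have := ((SimpleGraph.fromEdgeSet_adj _).1 hab).1
          exact_mod_cast this)) p
        have h2 : p.support.toFinset ⊆ C := by
          intro x hx
          rw [List.mem_toFinset] at hx
          simpa [C] using (p.takeUntil x hx).reachable.mono hle
        have h3 := card_le_card h2
        rw [List.toFinset_card_of_nodup hp.support_nodup, SimpleGraph.Walk.length_support] at h3
        omega
      have hpos := posDist_pos d (hAadj u v heA).ne
      obtain ⟨j, hj⟩ : ∃ j, C.card = j + 2 := ⟨C.card - 2, by omega⟩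
      have hfx : f (j + 1) ≤ f (posDist d s(u, v)) := hf_mono (by omega)
      have hnum := discount_sum_mul_le hf_nonneg hf_mono hf_one hf_zero j
      have hm0 : 0 ≤ W s(u, v) := hWnonneg _ (hAE heA)
      have hmW : ((j : ℝ) + 2) * W s(u, v) ≤ ∑ e ∈ S, W e := by
        have h1 : S.card • W s(u, v) ≤ ∑ e ∈ S, W e := by
          refine Finset.card_nsmul_le_sum _ _ _ fun e he => ?_
          induction e using Sym2.ind with
          | _ a b =>
            obtain ⟨hab, hr⟩ := (hSmem a b).1 he
            exact hmin a b hab hr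
        rw [nsmul_eq_mul] at h1
        have h2 : ((j : ℝ) + 2) ≤ S.card := by exact_mod_cast hj ▸ hCS
        exact (mul_le_mul_of_nonneg_right h2 hm0).trans h1
      have hsum : ∑ e ∈ S, f (posDist d e) * W e =
          ∑ e ∈ S, W e - W s(u, v) + f (posDist d s(u, v)) * W s(u, v) := by
        rw [← Finset.sum_erase_add _ _ heS, Finset.sum_congr rfl huniq,
          ← Finset.sum_erase_add S W heS]
        ring
      rw [hsum]
      have hx1 : f (j + 1) ≤ 1 := hf_one ▸ hf_mono (by omega)
      have hj0 : (0 : ℝ) < (j : ℝ) + 2 := by positivity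
      have hcycle : (j + 1 + f (j + 1)) * ∑ e ∈ S, W e ≤
          (j + 2) * (∑ e ∈ S, W e - W s(u, v) + f (posDist d s(u, v)) * W s(u, v)) := by
        nlinarith [mul_le_mul_of_nonneg_left hmW (sub_nonneg.2 hx1),
          mul_le_mul_of_nonneg_left (mul_le_mul_of_nonneg_right hfx hm0) hj0.le]
      have h1 := mul_le_mul_of_nonneg_right hnum hWS
      have h2 := mul_le_mul_of_nonneg_left hcycle hden.le
      refine le_of_mul_le_mul_left ?_ hj0
      calc _ = (k + 1) * (j + 2) * F * ∑ e ∈ S, W e := by ring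
        _ ≤ _ := h1
        _ = k * (k + 2) * ((j + 1 + f (j + 1)) * ∑ e ∈ S, W e) := by ring
        _ ≤ _ := h2
        _ = _ := by ring
  · push Not at hcyc
    have hsum : ∑ e ∈ S, f (posDist d e) * W e = ∑ e ∈ S, W e :=
      Finset.sum_congr rfl fun e he => by rw [hfA' e (hcyc e he), one_mul]
    rw [hsum]
    refine mul_le_mul_of_nonneg_right ?_ hWS
    have hFk := sum_discount_le hf_mono hf_one (le_refl k)
    rw [← hF] at hFk
    nlinarith
end

section
/- Let ℓ be an integer with k ≤ ℓ ≤ n. Suppose the ordering τ of V is locally optimal in the following (weak) sense: for every subset S ⊆ V with |S| ≤ ℓ and every ordering σ of S, Σ f(|τ(u)−τ(v)|)·w(u,v), summed over edges {u,v} ∈ E with at least one endpoint in S, is at least val_{G[S]}(σ), the value of σ on the induced subgraph G[S]. Then 2ℓ·val(τ) ≥ (ℓ−k)·OPT; equivalently, τ is a (2 + 2/(ℓ/k − 1))-approximation to the Ext-TSP optimum. -/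
open Classical in
/-- The Ext-TSP value of an ordering of `S` on the induced subgraph `G[S]`. -/
noncomputable def extValOn {V : Type} [Fintype V] [DecidableEq V] (G : SimpleGraph V)
    (w : V → V → ℝ) (f : ℕ → ℝ) (S : Finset V)
    (d : {x // x ∈ S} ≃ Fin S.card) : ℝ :=
  (1 / 2) * ∑ u : {x // x ∈ S}, ∑ v : {x // x ∈ S},
    if G.Adj u.1 v.1 then f (Nat.dist (d u) (d v)) * w u.1 v.1 else 0

/-- A strictly monotone map out of an initial segment of `ℕ` does not decrease distances. -/
lemma Fin.dist_le_dist_of_strictMono {m n : ℕ} {g : Fin m → Fin n} (hg : StrictMono g)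
    (a b : Fin m) : Nat.dist a b ≤ Nat.dist (g a) (g b) := by
  have key : ∀ j : ℕ, ∀ a b : Fin m, (b : ℕ) = a + j → (g a : ℕ) + j ≤ g b := by
    intro j
    induction j with
    | zero =>
      intro a b h
      rw [show b = a from Fin.ext h]
      simp
    | succ j ih =>
      intro a b h
      have hlt : (a : ℕ) + j < m := by omega
      have h₁ := ih a ⟨a + j, hlt⟩ rfl
      have h₂ : g ⟨a + j, hlt⟩ < g b := hg (Fin.lt_def.2 (by simp only; omega))
      have h₃ := Fin.lt_def.1 h₂
      omega
  rcases le_total (a : ℕ) b with h | h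
  · have := key (b - a) a b (by omega)
    unfold Nat.dist
    omega
  · have := key (a - b) b a (by omega)
    unfold Nat.dist
    omega

/-- Every finset of vertices has an ordering that does not increase the distances of a given
ordering of all vertices. -/
lemma exists_ordering_dist_le {V : Type} {n : ℕ} (d : V ≃ Fin n) (S : Finset V) :
    ∃ σ : {x // x ∈ S} ≃ Fin S.card,
      ∀ u v, Nat.dist (σ u) (σ v) ≤ Nat.dist (d u.1) (d v.1) := by
  classical
  let e := (S.map d.toEmbedding).orderIsoOfFin (Finset.card_map _)
  let r : {x // x ∈ S} ≃ {y // y ∈ S.map d.toEmbedding} :=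
    d.subtypeEquiv fun x => by simp
  refine ⟨r.trans e.symm.toEquiv, fun u v => ?_⟩
  have hmono : StrictMono fun i => (e i).1 := fun _ _ h => e.strictMono h
  refine (Fin.dist_le_dist_of_strictMono hmono _ _).trans_eq ?_
  simp [r]

/-- The value of an ordering restricted to the edges inside `S` is at most that of some
ordering of `S`. -/
lemma exists_extValOn_ge {V : Type} [Fintype V] [DecidableEq V] (G : SimpleGraph V)
    [DecidableRel G.Adj] {w : V → V → ℝ} (hw : ∀ u v, G.Adj u v → 0 ≤ w u v)
    {f : ℕ → ℝ} (hf : Antitone f) (d : V ≃ Fin (Fintype.card V)) (S : Finset V) :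
    ∃ σ : {x // x ∈ S} ≃ Fin S.card,
      (1 / 2) * (∑ u : V, ∑ v : V, if G.Adj u v ∧ u ∈ S ∧ v ∈ S
        then f (Nat.dist (d u) (d v)) * w u v else 0) ≤ extValOn G w f S σ := by
  obtain ⟨σ, hσ⟩ := exists_ordering_dist_le d S
  refine ⟨σ, ?_⟩
  have restrict : ∀ g : V → V → ℝ,
      (∑ u : V, ∑ v : V, if G.Adj u v ∧ u ∈ S ∧ v ∈ S then g u v else 0) =
        ∑ u : {x // x ∈ S}, ∑ v : {x // x ∈ S}, if G.Adj u.1 v.1 then g u v else 0 := by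
    intro g
    rw [Finset.sum_coe_sort S
      (fun u => ∑ v : {x // x ∈ S}, if G.Adj u v.1 then g u v else 0)]
    rw [← Finset.sum_subset (Finset.subset_univ S)
      (fun u _ hu => by simp [hu])]
    refine Finset.sum_congr rfl fun u hu => ?_
    rw [Finset.sum_coe_sort S (fun v => if G.Adj u v then g u v else 0)]
    rw [← Finset.sum_subset (Finset.subset_univ S)
      (fun v _ hv => by simp [hv])]
    exact Finset.sum_congr rfl fun v hv => by simp [hu, hv]
  rw [restrict, extValOn]
  refine mul_le_mul_of_nonneg_left ?_ (by norm_num)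
  refine Finset.sum_le_sum fun u _ => Finset.sum_le_sum fun v _ => ?_
  by_cases h : G.Adj u.1 v.1
  · simpa only [if_pos h] using
      mul_le_mul_of_nonneg_right (hf (hσ u v)) (hw _ _ h)
  · simp only [if_neg h, le_refl]

/-- The vertices whose position in `d` lies among the `ℓ` positions preceding `i`. -/
def orderingWindow {V : Type} [Fintype V] {n : ℕ} (d : V ≃ Fin n) (ℓ i : ℕ) : Finset V :=
  {v | (d v : ℕ) < i ∧ i ≤ d v + ℓ}

section Window

variable {V : Type} [Fintype V] {n : ℕ} (d : V ≃ Fin n) (ℓ : ℕ)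

lemma mem_orderingWindow {i : ℕ} {v : V} :
    v ∈ orderingWindow d ℓ i ↔ (d v : ℕ) < i ∧ i ≤ d v + ℓ := by
  simp [orderingWindow]

lemma card_orderingWindow_le (i : ℕ) : (orderingWindow d ℓ i).card ≤ ℓ := by
  have h : (orderingWindow d ℓ i).card ≤ (Finset.Ico (i - ℓ) i).card := by
    refine Finset.card_le_card_of_injOn (fun v => (d v : ℕ)) (fun v hv => ?_)
      (fun u _ v _ h => d.injective (Fin.ext h))
    have := (mem_orderingWindow d ℓ).1 hv
    simp only [Finset.coe_Ico, Set.mem_Ico]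
    omega
  rw [Nat.card_Ico] at h
  omega

variable [DecidableEq V]

lemma card_windows_meeting_le (u v : V) :
    ((Finset.range (n + ℓ)).filter fun i =>
      u ∈ orderingWindow d ℓ i ∨ v ∈ orderingWindow d ℓ i).card ≤ 2 * ℓ := by
  calc _ ≤ (Finset.Ioc (d u : ℕ) (d u + ℓ) ∪ Finset.Ioc (d v : ℕ) (d v + ℓ)).card := by
        refine Finset.card_le_card fun i hi => ?_
        simpa [mem_orderingWindow] using (Finset.mem_filter.1 hi).2
    _ ≤ _ := Finset.card_union_le _ _
    _ = 2 * ℓ := by simp only [Nat.card_Ioc]; omega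

lemma le_card_windows_containing (u v : V) :
    ℓ ≤ ((Finset.range (n + ℓ)).filter fun i =>
      u ∈ orderingWindow d ℓ i ∧ v ∈ orderingWindow d ℓ i).card + Nat.dist (d u) (d v) := by
  have h : (Finset.Ioc (max (d u : ℕ) (d v)) (min (d u : ℕ) (d v) + ℓ)).card ≤
      ((Finset.range (n + ℓ)).filter fun i =>
        u ∈ orderingWindow d ℓ i ∧ v ∈ orderingWindow d ℓ i).card := by
    refine Finset.card_le_card fun i hi => ?_
    have := (d u).isLt
    simp only [Finset.mem_Ioc] at hi
    simp only [Finset.mem_filter, Finset.mem_range, mem_orderingWindow]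
    omega
  rw [Nat.card_Ioc] at h
  unfold Nat.dist
  omega

end Window

/-- Summing over a family of vertex sets, each edge is counted once per set selecting it. -/
lemma sum_ite_family_eq {V : Type} [Fintype V] (G : SimpleGraph V) [DecidableRel G.Adj]
    (I : Finset ℕ) (P : ℕ → V → V → Prop) [∀ i u v, Decidable (P i u v)]
    (g : V → V → ℝ) :
    (∑ i ∈ I, (1 / 2) * ∑ u : V, ∑ v : V, if G.Adj u v ∧ P i u v then g u v else 0) =
      (1 / 2) * ∑ u : V, ∑ v : V,
        if G.Adj u v then ((I.filter fun i => P i u v).card : ℝ) * g u v else 0 := by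
  rw [← Finset.mul_sum, Finset.sum_comm]
  congr 1
  refine Finset.sum_congr rfl fun u _ => ?_
  rw [Finset.sum_comm]
  refine Finset.sum_congr rfl fun v _ => ?_
  by_cases h : G.Adj u v
  · simp [h, ← Finset.sum_filter]
  · simp [h]

/-- A constant multiple of the value, distributed over the edges. -/
lemma mul_extVal_eq {V : Type} [Fintype V] (G : SimpleGraph V) [DecidableRel G.Adj]
    (w : V → V → ℝ) (f : ℕ → ℝ) (d : V ≃ Fin (Fintype.card V)) (c : ℝ) :
    c * extVal G w f d = (1 / 2) * ∑ u : V, ∑ v : V,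
      if G.Adj u v then c * (f (Nat.dist (d u) (d v)) * w u v) else 0 := by
  rw [extVal, mul_left_comm, Finset.mul_sum]
  congr 1
  refine Finset.sum_congr rfl fun u _ => ?_
  rw [Finset.mul_sum]
  refine Finset.sum_congr rfl fun v _ => ?_
  by_cases h : G.Adj u v <;> simp [h]

/-- If `τ` is locally optimal in the weak sense — for every `S` of at most
`ℓ` vertices and every ordering `σ` of `S`, the discounted `τ`-weight of the edges meeting
`S` is at least `val_{G[S]}(σ)` — then `2ℓ·val(τ) ≥ (ℓ-k)·OPT`, i.e. `τ` is a
`(2 + 2/(ℓ/k - 1))`-approximation. -/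
theorem extTSP_local_search_approx {V : Type} [Fintype V] [DecidableEq V]
    (G : SimpleGraph V) [DecidableRel G.Adj]
    (w : V → V → ℝ) (hw_symm : ∀ u v, w u v = w v u)
    (hw_pos : ∀ u v, G.Adj u v → 0 < w u v)
    (k : ℕ) (hk : 1 ≤ k)
    (f : ℕ → ℝ) (hf_nonneg : ∀ i, 0 ≤ f i) (hf_mono : Antitone f)
    (hf_one : f 1 = 1) (hf_zero : ∀ i, k < i → f i = 0)
    (ℓ : ℕ) (hkℓ : k ≤ ℓ) (hℓn : ℓ ≤ Fintype.card V)
    (τ : V ≃ Fin (Fintype.card V))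
    (hloc : ∀ S : Finset V, S.card ≤ ℓ →
      ∀ σ : {x // x ∈ S} ≃ Fin S.card,
        (1 / 2) * (∑ u : V, ∑ v : V,
            if G.Adj u v ∧ (u ∈ S ∨ v ∈ S)
            then f (Nat.dist (τ u) (τ v)) * w u v else 0)
          ≥ extValOn G w f S σ) :
    2 * (ℓ : ℝ) * extVal G w f τ ≥
      ((ℓ : ℝ) - (k : ℝ)) * ⨆ d : V ≃ Fin (Fintype.card V), extVal G w f d := by
  have : Nonempty (V ≃ Fin (Fintype.card V)) := ⟨τ⟩
  obtain ⟨d, hd⟩ := exists_eq_ciSup_of_finite (ι := V ≃ Fin (Fintype.card V))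
    (f := fun d => extVal G w f d)
  rw [← hd, ge_iff_le]
  have hw : ∀ u v, G.Adj u v → 0 ≤ w u v := fun u v h => (hw_pos u v h).le
  have half_sum_le : ∀ a b : V → V → ℝ, (∀ u v, G.Adj u v → a u v ≤ b u v) →
      (1 / 2) * (∑ u : V, ∑ v : V, if G.Adj u v then a u v else 0) ≤
        (1 / 2) * ∑ u : V, ∑ v : V, if G.Adj u v then b u v else 0 := by
    intro a b hab
    refine mul_le_mul_of_nonneg_left ?_ (by norm_num)
    refine Finset.sum_le_sum fun u _ => Finset.sum_le_sum fun v _ => ?_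
    split_ifs with h
    exacts [hab u v h, le_rfl]
  have window_le : ∀ i ∈ Finset.range (Fintype.card V + ℓ),
      (1 / 2) * (∑ u : V, ∑ v : V,
        if G.Adj u v ∧ (u ∈ orderingWindow d ℓ i ∧ v ∈ orderingWindow d ℓ i)
        then f (Nat.dist (d u) (d v)) * w u v else 0) ≤
      (1 / 2) * (∑ u : V, ∑ v : V,
        if G.Adj u v ∧ (u ∈ orderingWindow d ℓ i ∨ v ∈ orderingWindow d ℓ i)
        then f (Nat.dist (τ u) (τ v)) * w u v else 0) := by
    intro i _
    obtain ⟨σ, hσ⟩ := exists_extValOn_ge G hw hf_mono d (orderingWindow d ℓ i)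
    exact hσ.trans (hloc _ (card_orderingWindow_le d ℓ i) σ)
  have total_le := Finset.sum_le_sum window_le
  rw [sum_ite_family_eq G _
      (fun i u v => u ∈ orderingWindow d ℓ i ∧ v ∈ orderingWindow d ℓ i),
    sum_ite_family_eq G _
      (fun i u v => u ∈ orderingWindow d ℓ i ∨ v ∈ orderingWindow d ℓ i)] at total_le
  rw [mul_extVal_eq, mul_extVal_eq]
  refine (half_sum_le _ _ fun u v h => ?_).trans
    (total_le.trans (half_sum_le _ _ fun u v h => ?_))
  · rcases lt_or_ge k (Nat.dist (d u) (d v)) with hfar | hnear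
    · simp [hf_zero _ hfar]
    · refine mul_le_mul_of_nonneg_right ?_ (mul_nonneg (hf_nonneg _) (hw u v h))
      rw [sub_le_iff_le_add]
      exact_mod_cast (le_card_windows_containing d ℓ u v).trans (Nat.add_le_add_left hnear _)
  · refine mul_le_mul_of_nonneg_right ?_ (mul_nonneg (hf_nonneg _) (hw u v h))
    exact_mod_cast card_windows_meeting_le d ℓ u v
end
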